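/- arXiv:0903.0473 — 2 statements merged into one kernel-verified Lean document; each statement's English description precedes it below -/
import Mathlib

section
/- Let s1 be a nonnegative integer and s2, s4 positive integers with s1+s4 > 1, s2+s4 > 1 and s1+s2+s4 > 2. Then ζ_so(s1,s2,0,s4) = 2^{s2−1} · [ ζ_MT(s1,s2;s4) + ∑_{a1=0}^{s1−1} C(s2+a1−1, a1) · ζ(s4+s2+a1, s1−a1; −1, −1) + ∑_{a2=0}^{s2−1} C(s1+a2−1, a2) · ζ(s4+s1+a2, s2−a2; 1, −1) ], where C(n,k) denotes the binomial coefficient. -/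
noncomputable def zetaSO (s1 s2 s3 s4 : ℕ) : ℝ :=
  ∑' (m : ℕ+) (n : ℕ+),
    1 / ((m : ℝ) ^ s1 * (n : ℝ) ^ s2 * ((m : ℝ) + (n : ℝ)) ^ s3 * ((m : ℝ) + 2 * (n : ℝ)) ^ s4)

noncomputable def zetaMT2 (s1 s2 s : ℕ) : ℝ :=
  ∑' (m : ℕ+) (n : ℕ+), 1 / ((m : ℝ) ^ s1 * (n : ℝ) ^ s2 * ((m : ℝ) + (n : ℝ)) ^ s)

/-- Depth-two alternating Euler sum `ζ(s1,s2; x1,x2)`, summing over `m1 = n + k > m2 = n ≥ 1`. -/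
noncomputable def es2 (s1 s2 : ℕ) (x1 x2 : ℝ) : ℝ :=
  ∑' (n : ℕ+) (k : ℕ+),
    x1 ^ ((n : ℕ) + (k : ℕ)) * x2 ^ (n : ℕ) / (((n : ℝ) + (k : ℝ)) ^ s1 * (n : ℝ) ^ s2)

noncomputable def pfA (u w : ℝ) (r s : ℕ) : ℝ :=
  ∑ a ∈ Finset.range r, (Nat.choose (s + a - 1) a : ℝ) * (w ^ (s + a) * u ^ (r - a))

lemma pfA_rec (u w : ℝ) (r s : ℕ) :
    pfA u w (r + 1) (s + 1) = w * (pfA u w r (s + 1) + pfA u w (r + 1) s) := by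
  unfold pfA
  rw [Finset.sum_range_succ', Finset.sum_range_succ' (n := r)]
  have h : ∀ a ∈ Finset.range r,
      (Nat.choose (s + 1 + (a + 1) - 1) (a + 1) : ℝ) * (w ^ (s + 1 + (a + 1)) * u ^ (r + 1 - (a + 1)))
      = w * ((Nat.choose (s + 1 + a - 1) a : ℝ) * (w ^ (s + 1 + a) * u ^ (r - a)))
        + w * ((Nat.choose (s + (a + 1) - 1) (a + 1) : ℝ) * (w ^ (s + (a + 1)) * u ^ (r + 1 - (a + 1)))) := by
    intro a _
    have e1 : s + 1 + (a + 1) - 1 = (s + a) + 1 := by omega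
    have e2 : s + 1 + a - 1 = s + a := by omega
    have e3 : s + (a + 1) - 1 = s + a := by omega
    have e4 : r + 1 - (a + 1) = r - a := by omega
    rw [e1, e2, e3, e4, Nat.choose_succ_succ]
    push_cast
    ring
  rw [Finset.sum_congr rfl h, Finset.sum_add_distrib, ← Finset.mul_sum, ← Finset.mul_sum]
  simp
  ring

lemma pfA_zero (u w : ℝ) (r : ℕ) (hr : 0 < r) : pfA u w r 0 = u ^ r := by
  unfold pfA
  obtain ⟨r, rfl⟩ : ∃ k, r = k + 1 := ⟨r - 1, by omega⟩
  rw [Finset.sum_range_succ', Finset.sum_eq_zero]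
  · simp
  · intro a _
    rw [Nat.choose_eq_zero_of_lt (by omega)]
    simp

lemma pf (u v w : ℝ) (h : u * v = w * (u + v)) : ∀ N r s : ℕ, r + s = N → 0 < N →
    u ^ r * v ^ s = pfA u w r s + pfA v w s r := by
  intro N
  induction N with
  | zero => intro r s _ h; omega
  | succ N ih =>
    intro r s hrs _
    rcases r with _ | r
    · rw [pfA_zero _ _ _ (by omega)]; simp [pfA]
    rcases s with _ | s
    · rw [pfA_zero _ _ _ (by omega)]; simp [pfA]
    have i1 := ih r (s + 1) (by omega) (by omega)
    have i2 := ih (r + 1) s (by omega) (by omega)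
    rw [pfA_rec, pfA_rec]
    calc u ^ (r + 1) * v ^ (s + 1) = (u * v) * (u ^ r * v ^ s) := by ring
      _ = w * (u ^ r * v ^ (s + 1) + u ^ (r + 1) * v ^ s) := by rw [h]; ring
      _ = _ := by rw [i1, i2]; ring

/-- summand of the Euler sum -/
noncomputable def eT (p q : ℕ) (x1 x2 : ℝ) (z : ℕ+ × ℕ+) : ℝ :=
  x1 ^ ((z.1 : ℕ) + (z.2 : ℕ)) * x2 ^ (z.1 : ℕ) / (((z.1 : ℝ) + (z.2 : ℝ)) ^ p * (z.1 : ℝ) ^ q)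

lemma pnat_one_le (n : ℕ+) : (1 : ℝ) ≤ (n : ℝ) := by exact_mod_cast n.pos

lemma sum_base : Summable (fun z : ℕ+ × ℕ+ =>
    1 / (((z.1 : ℝ)) ^ (3 / 2 : ℝ)) * (1 / ((z.2 : ℝ)) ^ (3 / 2 : ℝ))) := by
  have h0 : Summable (fun n : ℕ => 1 / ((n : ℝ)) ^ (3 / 2 : ℝ)) :=
    Real.summable_one_div_nat_rpow.mpr (by norm_num)
  have h : Summable (fun n : ℕ+ => 1 / ((n : ℝ)) ^ (3 / 2 : ℝ)) :=
    h0.comp_injective PNat.coe_injective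
  exact h.mul_of_nonneg h (fun n => by positivity) (fun n => by positivity)

lemma eT_summable (p q : ℕ) (hp : 2 ≤ p) (hq : 1 ≤ q) (x1 x2 : ℝ) (h1 : |x1| = 1) (h2 : |x2| = 1) :
    Summable (eT p q x1 x2) := by
  refine Summable.of_norm_bounded sum_base ?_
  rintro ⟨n, k⟩
  have hn := pnat_one_le n
  have hk := pnat_one_le k
  simp only [eT]
  set a : ℝ := (n : ℝ)
  set b : ℝ := (k : ℝ)
  have ha : 0 < a := by linarith
  have hb : 0 < b := by linarith
  rw [Real.norm_eq_abs, abs_div, abs_mul, abs_pow, abs_pow, h1, h2, one_pow, one_pow, one_mul,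
    abs_of_pos (by positivity), one_div_mul_one_div]
  apply one_div_le_one_div_of_le (by positivity)
  calc a ^ (3 / 2 : ℝ) * b ^ (3 / 2 : ℝ) = (a ^ (1 / 2 : ℝ) * b ^ (3 / 2 : ℝ)) * a := by
        rw [show (3 / 2 : ℝ) = 1 / 2 + 1 by norm_num, Real.rpow_add ha, Real.rpow_one]; ring
    _ ≤ ((a + b) ^ (1 / 2 : ℝ) * (a + b) ^ (3 / 2 : ℝ)) * a := by
        gcongr <;> linarith
    _ = (a + b) ^ 2 * a := by
        rw [← Real.rpow_add (by positivity)]; norm_num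
    _ ≤ (a + b) ^ p * a ^ q := by
        gcongr
        · linarith
        · exact le_self_pow₀ hn (by omega)

lemma es2_eq (p q : ℕ) (hp : 2 ≤ p) (hq : 1 ≤ q) (x1 x2 : ℝ) (h1 : |x1| = 1) (h2 : |x2| = 1) :
    es2 p q x1 x2 = ∑' z, eT p q x1 x2 z := by
  rw [(eT_summable p q hp hq x1 x2 h1 h2).tsum_prod]
  rfl

noncomputable def fT (s1 s2 s4 : ℕ) (z : ℕ+ × ℕ+) : ℝ :=
  1 / ((z.1 : ℝ) ^ s1 * (z.2 : ℝ) ^ s2 * ((z.1 : ℝ) + (z.2 : ℝ)) ^ s4)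

/-- general decomposition with sign -/
lemma fT_decomp (s1 s2 s4 : ℕ) (h2 : 0 < s2) (z : ℕ+ × ℕ+) (x : ℝ) (hx : x * x = 1) :
    x ^ (z.2 : ℕ) * fT s1 s2 s4 z =
      (∑ a ∈ Finset.range s1, (Nat.choose (s2 + a - 1) a : ℝ) * eT (s4 + s2 + a) (s1 - a) x x z)
      + ∑ a ∈ Finset.range s2,
          (Nat.choose (s1 + a - 1) a : ℝ) * eT (s4 + s1 + a) (s2 - a) 1 x z.swap := by
  obtain ⟨m, n⟩ := z
  have hm : (0 : ℝ) < (m : ℝ) := by have := pnat_one_le m; linarith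
  have hn : (0 : ℝ) < (n : ℝ) := by have := pnat_one_le n; linarith
  simp only [fT, eT, Prod.swap, one_pow]
  have hxx : x ^ ((m : ℕ) + (n : ℕ)) * x ^ (m : ℕ) = x ^ (n : ℕ) := by
    rw [pow_add, mul_right_comm, ← mul_pow, hx, one_pow, one_mul]
  rw [hxx]
  generalize x ^ (n : ℕ) = ε
  generalize (m : ℝ) = a at *
  generalize (n : ℝ) = b at *
  have key := pf a⁻¹ b⁻¹ (a + b)⁻¹ (by field_simp; ring) (s1 + s2) s1 s2 rfl (by omega)
  calc ε * (1 / (a ^ s1 * b ^ s2 * (a + b) ^ s4))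
      = ε * ((a + b)⁻¹ ^ s4 * (a⁻¹ ^ s1 * b⁻¹ ^ s2)) := by
        simp only [inv_pow]; field_simp
    _ = _ := by
        rw [key, mul_add, mul_add]
        unfold pfA
        simp only [Finset.mul_sum]
        congr 1
        · refine Finset.sum_congr rfl fun i _ => ?_
          rw [div_eq_mul_inv, mul_inv, ← inv_pow, ← inv_pow, add_assoc, pow_add _ s4]; ring
        · refine Finset.sum_congr rfl fun i _ => ?_
          rw [div_eq_mul_inv, mul_inv, ← inv_pow, ← inv_pow, add_assoc, pow_add _ s4,
            add_comm b a]; ring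

lemma stmt_sum1 (s1 s2 s4 : ℕ) (h2 : 0 < s2) (h4 : 0 < s4) (h14 : 1 < s1 + s4)
    (x : ℝ) (hx : |x| = 1) :
    HasSum (fun z : ℕ+ × ℕ+ => x ^ (z.2 : ℕ) * fT s1 s2 s4 z)
      ((∑ a ∈ Finset.range s1, (Nat.choose (s2 + a - 1) a : ℝ) * es2 (s4 + s2 + a) (s1 - a) x x)
      + ∑ a ∈ Finset.range s2,
          (Nat.choose (s1 + a - 1) a : ℝ) * es2 (s4 + s1 + a) (s2 - a) 1 x) := by
  have hxx : x * x = 1 := by rw [← abs_mul_abs_self, hx, one_mul]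
  rw [show (fun z : ℕ+ × ℕ+ => x ^ (z.2 : ℕ) * fT s1 s2 s4 z) = _ from
    funext fun z => fT_decomp s1 s2 s4 h2 z x hxx]
  apply HasSum.add
  · apply hasSum_sum
    intro a ha
    rw [Finset.mem_range] at ha
    apply HasSum.mul_left
    rw [es2_eq _ _ (by omega) (by omega) _ _ hx hx]
    exact (eT_summable _ _ (by omega) (by omega) _ _ hx hx).hasSum
  · apply hasSum_sum
    intro a ha
    rw [Finset.mem_range] at ha
    apply HasSum.mul_left
    rw [es2_eq _ _ (by omega) (by omega) _ _ abs_one hx]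
    exact (Equiv.prodComm ℕ+ ℕ+).hasSum_iff.mpr
      (eT_summable _ _ (by omega) (by omega) _ _ abs_one hx).hasSum

theorem stmt8 (s1 s2 s4 : ℕ) (h2 : 0 < s2) (h4 : 0 < s4) (h14 : 1 < s1 + s4)
    (h24 : 1 < s2 + s4) (h124 : 2 < s1 + s2 + s4) :
    zetaSO s1 s2 0 s4 =
      2 ^ (s2 - 1) * (zetaMT2 s1 s2 s4
        + (∑ a1 ∈ Finset.range s1,
            (Nat.choose (s2 + a1 - 1) a1 : ℝ) * es2 (s4 + s2 + a1) (s1 - a1) (-1) (-1))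
        + ∑ a2 ∈ Finset.range s2,
            (Nat.choose (s1 + a2 - 1) a2 : ℝ) * es2 (s4 + s1 + a2) (s2 - a2) 1 (-1)) := by
  have hS : Summable (fT s1 s2 s4) := by
    have := (stmt_sum1 s1 s2 s4 h2 h4 h14 1 abs_one).summable
    simpa using this
  have hMT : HasSum (fT s1 s2 s4) (zetaMT2 s1 s2 s4) := by
    have := hS.hasSum
    rw [hS.tsum_prod] at this
    exact this
  have hA := stmt_sum1 s1 s2 s4 h2 h4 h14 (-1) (by simp)
  have hG := (hMT.add hA).mul_left ((2 : ℝ) ^ (s2 - 1))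
  rw [add_assoc]
  have hinj : Function.Injective (fun z : ℕ+ × ℕ+ => (z.1, 2 * z.2)) := by
    rintro ⟨a, b⟩ ⟨c, d⟩ h
    simpa using h
  rw [← hinj.hasSum_iff] at hG
  · have hfun : ((fun z : ℕ+ × ℕ+ => (2 : ℝ) ^ (s2 - 1) *
        (fT s1 s2 s4 z + (-1) ^ (z.2 : ℕ) * fT s1 s2 s4 z)) ∘ fun z : ℕ+ × ℕ+ => (z.1, 2 * z.2))
        = fun z : ℕ+ × ℕ+ => 1 / ((z.1 : ℝ) ^ s1 * (z.2 : ℝ) ^ s2 *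
          ((z.1 : ℝ) + (z.2 : ℝ)) ^ 0 * ((z.1 : ℝ) + 2 * (z.2 : ℝ)) ^ s4) := by
      funext ⟨m, n⟩
      have hm : (0 : ℝ) < (m : ℝ) := by have := pnat_one_le m; linarith
      have hn : (0 : ℝ) < (n : ℝ) := by have := pnat_one_le n; linarith
      simp only [Function.comp, fT, PNat.mul_coe, PNat.val_ofNat, pow_mul, neg_one_sq, one_pow,
        one_mul, pow_zero, mul_one, Nat.cast_mul, Nat.cast_ofNat, mul_pow]
      obtain ⟨t, rfl⟩ : ∃ t, s2 = t + 1 := ⟨s2 - 1, by omega⟩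
      rw [Nat.add_sub_cancel]
      field_simp
      ring
    rw [hfun] at hG
    rw [← hG.tsum_eq, hG.summable.tsum_prod]
    rfl
  · rintro ⟨m, n⟩ hz
    have hodd : Odd (n : ℕ) := by
      by_contra hne
      rw [Nat.not_odd_iff_even] at hne
      obtain ⟨k, hk⟩ := hne
      have hk0 : 0 < k := by have := n.pos; omega
      exact hz ⟨(m, ⟨k, hk0⟩), by
        refine Prod.ext rfl (PNat.eq ?_)
        change 2 * k = (n : ℕ)
        omega⟩
    simp only [hodd.neg_one_pow]
    ring
end

section
/- ζ_so(2,2,2,2) = (3/700)·ζ(2)^4 = (2·3/(5·9!))·π^8 = π^8/302400. -/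
noncomputable def rzeta (s : ℕ) : ℝ := ∑' m : ℕ+, 1 / (m : ℝ) ^ s

open Filter Topology

theorem aux_cv {ι : Type*} {f g : ι → ℝ} {a b : ℝ} (h : HasSum f a) (h1 : ∀ k, g k = f k)
    (h2 : b = a) : HasSum g b := by
  obtain rfl : g = f := funext h1
  rw [h2]; exact h

theorem aux_b5 : bernoulli' 5 = 0 := by
  rw [bernoulli'_def]
  norm_num [Finset.sum_range_succ, Nat.choose]

theorem aux_b6 : bernoulli' 6 = 1 / 42 := by
  rw [bernoulli'_def]
  norm_num [Finset.sum_range_succ, aux_b5, Nat.choose]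

theorem aux_b7 : bernoulli' 7 = 0 := by
  rw [bernoulli'_def]
  norm_num [Finset.sum_range_succ, aux_b5, aux_b6, Nat.choose]

theorem aux_b8 : bernoulli' 8 = -1 / 30 := by
  rw [bernoulli'_def]
  norm_num [Finset.sum_range_succ, aux_b5, aux_b6, aux_b7, Nat.choose]

theorem aux_z2 : HasSum (fun k : ℕ => (((k : ℝ) + 1)⁻¹) ^ 2) (Real.pi ^ 2 / 6) := by
  have h := (hasSum_nat_add_iff' (f := fun k : ℕ => 1 / (k : ℝ) ^ 2) 1).2 hasSum_zeta_two
  simpa using h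

theorem aux_z6 : HasSum (fun k : ℕ => (((k : ℝ) + 1)⁻¹) ^ 6) (Real.pi ^ 6 / 945) := by
  have h0 := hasSum_zeta_nat (k := 3) (by norm_num)
  have hb : bernoulli 6 = 1 / 42 := by
    rw [bernoulli_eq_bernoulli'_of_ne_one (by norm_num), aux_b6]
  have h := (hasSum_nat_add_iff' (f := fun k : ℕ => 1 / (k : ℝ) ^ (2 * 3)) 1).2 h0
  refine aux_cv h (fun k => ?_) ?_
  · simp
  · norm_num [hb, Nat.factorial]; ring

theorem aux_z8 : HasSum (fun k : ℕ => (((k : ℝ) + 1)⁻¹) ^ 8) (Real.pi ^ 8 / 9450) := by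
  have h0 := hasSum_zeta_nat (k := 4) (by norm_num)
  have hb : bernoulli 8 = -1 / 30 := by
    rw [bernoulli_eq_bernoulli'_of_ne_one (by norm_num), aux_b8]
  have h := (hasSum_nat_add_iff' (f := fun k : ℕ => 1 / (k : ℝ) ^ (2 * 4)) 1).2 h0
  refine aux_cv h (fun k => ?_) ?_
  · simp
  · norm_num [hb, Nat.factorial]; ring

theorem aux_B (n : ℕ) : ∃ a b : ℝ, HasSum (fun k : ℕ => (((k : ℝ) + 1 - n)⁻¹) ^ 2) a ∧
    HasSum (fun k : ℕ => (((k : ℝ) + 1 + n)⁻¹) ^ 2) b ∧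
    a + b = Real.pi ^ 2 / 3 - ((n : ℝ)⁻¹) ^ 2 := by
  induction n with
  | zero => exact ⟨_, _, by simpa using aux_z2, by simpa using aux_z2, by norm_num; ring⟩
  | succ n ih =>
    obtain ⟨a, b, ha, hb, hab⟩ := ih
    refine ⟨a + ((n : ℝ)⁻¹) ^ 2, b - (((n : ℝ) + 1)⁻¹) ^ 2, ?_, ?_, ?_⟩
    · rw [← hasSum_nat_add_iff' 1]
      refine aux_cv ha (fun k => ?_) ?_
      · push_cast; congr 2; ring
      · simp
    · have := (hasSum_nat_add_iff' 1).2 hb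
      refine aux_cv this (fun k => ?_) ?_
      · push_cast; congr 2; ring
      · simp [add_comm]
    · push_cast; linarith

theorem aux_inv (c : ℝ) : Tendsto (fun N : ℕ => ((N : ℝ) + c)⁻¹) atTop (𝓝 0) :=
  tendsto_inv_atTop_zero.comp (tendsto_atTop_add_const_right _ c tendsto_natCast_atTop_atTop)

theorem aux_P (n : ℕ) : Tendsto (fun N : ℕ => ∑ k ∈ Finset.range N,
    (((k : ℝ) + 1 - n)⁻¹ - ((k : ℝ) + 1 + n)⁻¹)) atTop (𝓝 ((n : ℝ)⁻¹)) := by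
  induction n with
  | zero => simp
  | succ n ih =>
    have h : ∀ N : ℕ, ∑ k ∈ Finset.range N,
        (((k : ℝ) + 1 - (n + 1 : ℕ))⁻¹ - ((k : ℝ) + 1 + (n + 1 : ℕ))⁻¹) =
        (∑ k ∈ Finset.range N, (((k : ℝ) + 1 - n)⁻¹ - ((k : ℝ) + 1 + n)⁻¹))
        + (-(n : ℝ)⁻¹ - ((N : ℝ) + (-n))⁻¹) + (((n : ℝ) + 1)⁻¹ - ((N : ℝ) + (1 + n))⁻¹) := by
      intro N
      induction N with
      | zero => simp [inv_neg, add_comm]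
      | succ N ihN =>
        rw [Finset.sum_range_succ, Finset.sum_range_succ, ihN]
        push_cast
        rw [show (N : ℝ) + 1 - (n + 1) = N + -n by ring,
          show (N : ℝ) + 1 + (n + 1) = N + 1 + (1 + n) by ring,
          show (N : ℝ) + 1 - n = N + 1 + -n by ring,
          show (N : ℝ) + 1 + n = N + (1 + n) by ring]
        ring
    simp_rw [h]
    have := (ih.add ((tendsto_const_nhds (x := -(n : ℝ)⁻¹)).sub (aux_inv (-n)))).add
      ((tendsto_const_nhds (x := ((n : ℝ) + 1)⁻¹)).sub (aux_inv (1 + n)))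
    convert this using 2
    push_cast; ring

theorem aux_G (n : ℕ) (hn : 0 < n) :
    HasSum (fun k : ℕ => ((k : ℝ) + 1 - n)⁻¹ * ((k : ℝ) + 1 + n)⁻¹) (3 / 4 * ((n : ℝ)⁻¹) ^ 2) := by
  have hn0 : (n : ℝ) ≠ 0 := by positivity
  obtain ⟨a, b, ha, hb, -⟩ := aux_B n
  have hs : Summable (fun k : ℕ => ((k : ℝ) + 1 - n)⁻¹ * ((k : ℝ) + 1 + n)⁻¹) := by
    refine Summable.of_norm_bounded (ha.add hb).summable (fun k => ?_)
    rw [Real.norm_eq_abs, abs_le]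
    constructor <;> nlinarith [sq_nonneg (((k : ℝ) + 1 - n)⁻¹ + ((k : ℝ) + 1 + n)⁻¹),
      sq_nonneg (((k : ℝ) + 1 - n)⁻¹ - ((k : ℝ) + 1 + n)⁻¹), sq_nonneg (((k : ℝ) + 1 - n)⁻¹),
      sq_nonneg (((k : ℝ) + 1 + n)⁻¹)]
  have hI : HasSum (fun k : ℕ => if k = n - 1 then 1 / (4 * (n : ℝ) ^ 2) else 0)
    (1 / (4 * (n : ℝ) ^ 2)) := hasSum_ite_eq _ _
  rw [hs.hasSum_iff_tendsto_nat]
  have h1 := ((aux_P n).const_mul (1 / (2 * (n : ℝ)))).add hI.tendsto_sum_nat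
  convert h1 using 2
  · rw [Finset.mul_sum, ← Finset.sum_add_distrib]
    refine Finset.sum_congr rfl fun k _ => ?_
    split_ifs with h
    · have : (k : ℝ) + 1 = n := by
        have : k + 1 = n := by omega
        exact_mod_cast this
      rw [this]; simp; field_simp; norm_num
    · have h2 : (k : ℝ) + 1 - n ≠ 0 := by
        intro h3
        have : ((k + 1 : ℕ) : ℝ) = n := by push_cast; linarith
        have := Nat.cast_injective this
        omega
      have h3 : (k : ℝ) + 1 + n ≠ 0 := by positivity
      field_simp; ring
  · field_simp; norm_num

/-- the symmetric summand -/
noncomputable def auxF (p : ℕ × ℕ) : ℝ :=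
  (((p.1 : ℝ) + 1)⁻¹ * ((p.2 : ℝ) + 1)⁻¹ * ((((p.2 : ℝ) + 1) ^ 2 - ((p.1 : ℝ) + 1) ^ 2)⁻¹)) ^ 2

theorem aux_T (n : ℕ) : HasSum (fun k : ℕ => auxF (n, k))
    (Real.pi ^ 2 / 4 * (((n : ℝ) + 1)⁻¹) ^ 6 - 39 / 16 * (((n : ℝ) + 1)⁻¹) ^ 8) := by
  have hn0 : (n : ℝ) + 1 ≠ 0 := by positivity
  obtain ⟨a, b, ha, hb, hab⟩ := aux_B (n + 1)
  have hG := aux_G (n + 1) (by omega)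
  push_cast at ha hb hab hG
  have hI : HasSum (fun k : ℕ => if k = n then -(17 / 16 * (((n : ℝ) + 1)⁻¹) ^ 8) else 0)
    (-(17 / 16 * (((n : ℝ) + 1)⁻¹) ^ 8)) := hasSum_ite_eq _ _
  have h := ((aux_z2.mul_left ((((n : ℝ) + 1)⁻¹) ^ 6)).add
    ((((ha.add hb).mul_left (1 / 4)).sub (hG.mul_left (3 / 2))).mul_left
      ((((n : ℝ) + 1)⁻¹) ^ 6))).add hI
  refine aux_cv h (fun k => ?_) ?_
  · unfold auxF
    split_ifs with h
    · subst h
      simp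
      have : (k : ℝ) + 1 + (k + 1) ≠ 0 := by positivity
      field_simp
      ring
    · have h2 : (k : ℝ) + 1 - (n + 1) ≠ 0 := by
        intro h3
        have : (k : ℝ) = n := by linarith
        exact h (Nat.cast_injective this)
      have h3 : (k : ℝ) + 1 + (n + 1) ≠ 0 := by positivity
      have h4 : (k : ℝ) + 1 ≠ 0 := by positivity
      have h5 : ((k : ℝ) + 1) ^ 2 - (n + 1) ^ 2 = (k + 1 - (n + 1)) * (k + 1 + (n + 1)) := by ring
      simp only [h5]
      generalize (n : ℝ) + 1 = x at *
      generalize (k : ℝ) + 1 = y at *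
      field_simp
      ring
  · rw [hab]; ring

theorem aux_sF : Summable auxF := by
  rw [summable_prod_of_nonneg (fun p => by unfold auxF; exact sq_nonneg _)]
  refine ⟨fun n => (aux_T n).summable, ?_⟩
  simp_rw [fun n => (aux_T n).tsum_eq]
  exact ((aux_z6.mul_left _).sub (aux_z8.mul_left _)).summable

theorem aux_U : ∑' p, auxF p = Real.pi ^ 8 / 151200 := by
  rw [aux_sF.tsum_prod]
  simp_rw [fun n => (aux_T n).tsum_eq]
  rw [((aux_z6.mul_left _).sub (aux_z8.mul_left _)).tsum_eq]
  ring

def auxI (p : ℕ × ℕ) : ℕ × ℕ := (p.2, p.1 + p.2 + 1)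

theorem auxI_inj : Function.Injective auxI := by
  rintro ⟨a, b⟩ ⟨c, d⟩ h
  simp only [auxI, Prod.mk.injEq] at h ⊢
  omega

noncomputable def auxF1 (p : ℕ × ℕ) : ℝ := if p.1 < p.2 then auxF p else 0

theorem aux_h1 : ∑' p, auxF (auxI p) = ∑' p, auxF1 p := by
  have hsupp : Function.support auxF1 ⊆ Set.range auxI := by
    rintro ⟨a, b⟩ h
    rw [Function.mem_support] at h
    have hab : a < b := by
      by_contra hc
      exact h (if_neg hc)
    refine ⟨(b - a - 1, a), ?_⟩
    have : b - a - 1 + a + 1 = b := by omega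
    simp only [auxI, this]
  rw [← auxI_inj.tsum_eq hsupp]
  refine tsum_congr fun p => ?_
  have hp : (auxI p).1 < (auxI p).2 := by
    simp only [auxI]; omega
  rw [auxF1, if_pos hp]

theorem auxF_nonneg (p : ℕ × ℕ) : 0 ≤ auxF p := sq_nonneg _

theorem aux_sF1 : Summable auxF1 := by
  refine Summable.of_nonneg_of_le (fun p => ?_) (fun p => ?_) aux_sF
  · unfold auxF1; split_ifs
    · exact auxF_nonneg p
    · exact le_rfl
  · unfold auxF1; split_ifs
    · exact le_rfl
    · exact auxF_nonneg p

theorem auxF_symm (a b : ℕ) : auxF (a, b) = auxF (b, a) := by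
  simp only [auxF]
  rw [← neg_sub (((a : ℝ) + 1) ^ 2), inv_neg]
  ring

theorem aux_split (p : ℕ × ℕ) : auxF p = auxF1 p + auxF1 p.swap := by
  obtain ⟨a, b⟩ := p
  simp only [auxF1, Prod.swap]
  rcases lt_trichotomy a b with h | h | h
  · rw [if_pos h, if_neg (by omega), add_zero]
  · subst h; simp [auxF]
  · rw [if_neg (by omega), if_pos h, zero_add, auxF_symm]

theorem aux_half : ∑' p, auxF (auxI p) = Real.pi ^ 8 / 302400 := by
  have h2 : ∑' p : ℕ × ℕ, auxF1 p.swap = ∑' p, auxF1 p := (Equiv.prodComm ℕ ℕ).tsum_eq auxF1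
  have hs2 : Summable (fun p : ℕ × ℕ => auxF1 p.swap) :=
    aux_sF1.comp_injective Prod.swap_injective
  have h3 : ∑' p, auxF p = ∑' p, auxF1 p + ∑' p : ℕ × ℕ, auxF1 p.swap := by
    rw [← aux_sF1.tsum_add hs2]
    exact tsum_congr aux_split
  rw [h2, ← aux_h1, aux_U] at h3
  linarith

theorem aux_zeta : zetaSO 2 2 2 2 = Real.pi ^ 8 / 302400 := by
  have hs : Summable (fun p => auxF (auxI p)) := aux_sF.comp_injective auxI_inj
  rw [← aux_half, hs.tsum_prod]
  unfold zetaSO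
  rw [← Equiv.pnatEquivNat.symm.tsum_eq]
  refine tsum_congr fun m => ?_
  rw [← Equiv.pnatEquivNat.symm.tsum_eq]
  refine tsum_congr fun n => ?_
  simp only [auxF, auxI, Equiv.pnatEquivNat_symm_apply, Nat.succPNat_coe, Nat.succ_eq_add_one]
  push_cast
  rw [show ((m : ℝ) + n + 1 + 1) ^ 2 - (n + 1) ^ 2 = (m + 1) * (m + 1 + 2 * (n + 1)) by ring]
  rw [show (m : ℝ) + n + 1 + 1 = m + 1 + (n + 1) by ring]
  have h1 : (m : ℝ) + 1 ≠ 0 := by positivity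
  have h2 : (n : ℝ) + 1 ≠ 0 := by positivity
  have h3 : (m : ℝ) + 1 + (n + 1) ≠ 0 := by positivity
  have h4 : (m : ℝ) + 1 + 2 * (n + 1) ≠ 0 := by positivity
  field_simp

theorem aux_rz : rzeta 2 = Real.pi ^ 2 / 6 := by
  unfold rzeta
  rw [← aux_z2.tsum_eq, ← Equiv.pnatEquivNat.symm.tsum_eq]
  refine tsum_congr fun n => ?_
  simp

theorem stmt19 :
    zetaSO 2 2 2 2 = (3 / 700) * (rzeta 2) ^ 4 ∧
    (3 / 700) * (rzeta 2) ^ 4 = (2 * 3 / (5 * (Nat.factorial 9 : ℝ))) * Real.pi ^ 8 ∧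
    (2 * 3 / (5 * (Nat.factorial 9 : ℝ))) * Real.pi ^ 8 = Real.pi ^ 8 / 302400 := by
  have hf : (Nat.factorial 9 : ℝ) = 362880 := by norm_num [Nat.factorial]
  rw [aux_zeta, aux_rz, hf]
  refine ⟨?_, ?_, ?_⟩ <;> ring
end
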